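/- lim_{s→1⁻} (1-s) ∫_{H ∩ Q} ∫_{H^c ∩ Q^c} |x-y|^{-(n+s)} dx dy = 0, where H = {x ∈ ℝⁿ : xₙ ≤ 0} and Q = (-1/2, 1/2)ⁿ. -/

import Mathlib

open Set Filter MeasureTheory

noncomputable def aux10_a (n : ℕ) (i : Fin (n+1)) (t : ℝ) : ℝ :=
  if i = Fin.last n then |t| else 1/2 - |t|

theorem aux10_1d (n : ℕ) (i : Fin (n+1)) :
    IntegrableOn (fun t => (√(aux10_a n i t))⁻¹) (Ioo (-(1/2)) (1/2)) := by
  have key : IntegrableOn (fun t : ℝ => (√t)⁻¹) (Ioo 0 (1/2)) := by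
    have h := (intervalIntegral.intervalIntegrable_rpow' (a := 0) (b := 1/2) (r := -(1/2)) (by norm_num)).1
    refine (h.mono_set Ioo_subset_Ioc_self).congr_fun ?_ measurableSet_Ioo
    intro t ht
    simp only [Real.sqrt_eq_rpow]
    rw [Real.rpow_neg ht.1.le]
  have pos : IntegrableOn (fun t => (√(aux10_a n i t))⁻¹) (Ioo 0 (1/2)) := by
    unfold aux10_a
    split_ifs with h
    · refine key.congr_fun ?_ measurableSet_Ioo
      intro t ht
      simp only [abs_of_pos ht.1]
    · have h2 : IntegrableOn (fun t : ℝ => (√(1/2 - t))⁻¹) (Ioo 0 (1/2)) := by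
        have := (Measure.measurePreserving_sub_left (volume : Measure ℝ) (1/2)).integrableOn_comp_preimage
          (Homeomorph.subLeft (1/2:ℝ)).measurableEmbedding (f := fun t : ℝ => (√t)⁻¹) (s := Ioo 0 (1/2))
        have h3 := this.2 key
        simpa [Function.comp_def] using h3
      refine h2.congr_fun ?_ measurableSet_Ioo
      intro t ht
      simp only [abs_of_pos ht.1]
  have even : ∀ t, aux10_a n i (-t) = aux10_a n i t := by
    intro t; simp [aux10_a]
  have neg : IntegrableOn (fun t => (√(aux10_a n i t))⁻¹) (Ioo (-(1/2)) 0) := by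
    have := (Measure.measurePreserving_neg (volume : Measure ℝ)).integrableOn_comp_preimage
          (Homeomorph.neg ℝ).measurableEmbedding (f := fun t => (√(aux10_a n i t))⁻¹) (s := Ioo 0 (1/2))
    have h3 := this.2 pos
    simpa [Function.comp_def, even] using h3
  have zero : IntegrableOn (fun t => (√(aux10_a n i t))⁻¹) {0} := by
    simp
  refine ((neg.union zero).union pos).mono_set ?_
  intro t ht
  rcases lt_trichotomy t 0 with h | h | h
  · exact Or.inl (Or.inl ⟨ht.1, h⟩)
  · exact Or.inl (Or.inr h)
  · exact Or.inr ⟨h, ht.2⟩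

theorem aux10_W (n : ℕ) :
    IntegrableOn (fun x : EuclideanSpace ℝ (Fin (n + 1)) => (∏ i, √(aux10_a n i (x i)))⁻¹)
      {x | ∀ i, |x i| < 1 / 2} := by
  have h1 : Integrable (fun x : Fin (n+1) → ℝ => ∏ i,
      (Ioo (-(1/2):ℝ) (1/2)).indicator (fun t => (√(aux10_a n i t))⁻¹) (x i)) volume := by
    apply Integrable.fintype_prod
      (f := fun i => (Ioo (-(1/2):ℝ) (1/2)).indicator (fun t => (√(aux10_a n i t))⁻¹))
    intro i
    exact (integrable_indicator_iff measurableSet_Ioo).2 (aux10_1d n i)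
  have h2 : Integrable (fun x : EuclideanSpace ℝ (Fin (n + 1)) => ∏ i,
      (Ioo (-(1/2):ℝ) (1/2)).indicator (fun t => (√(aux10_a n i t))⁻¹) (x i)) volume :=
    (PiLp.volume_preserving_ofLp (Fin (n+1))).integrable_comp_of_integrable h1
  have hm : MeasurableSet {x : EuclideanSpace ℝ (Fin (n + 1)) | ∀ i, |x i| < 1 / 2} := by
    rw [ofPred_forall]
    exact MeasurableSet.iInter fun i => measurableSet_lt (by fun_prop) (by fun_prop)
  refine (h2.integrableOn (s := {x | ∀ i, |x i| < 1 / 2})).congr_fun ?_ hm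
  intro x hx
  have hx' : ∀ i, x i ∈ Ioo (-(1/2):ℝ) (1/2) := fun i => abs_lt.1 (hx i)
  simp only [indicator_of_mem (hx' _)]
  exact Finset.prod_inv_distrib _

theorem aux10_ae (n : ℕ) : ∀ᵐ x : EuclideanSpace ℝ (Fin (n + 1)), x (Fin.last n) ≠ 0 := by
  have h : ∀ᵐ x : Fin (n + 1) → ℝ, x (Fin.last n) ≠ 0 := by
    have := Measure.pi_hyperplane (fun _ : Fin (n+1) => (volume : Measure ℝ)) (Fin.last n) 0
    rw [← volume_pi] at this
    simpa [ae_iff] using this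
  exact (EuclideanSpace.volume_preserving_symm_measurableEquiv_toLp (Fin (n+1))).quasiMeasurePreserving.ae h

/-- distance bound -/
theorem aux10_d (n : ℕ) (x y : EuclideanSpace ℝ (Fin (n + 1))) (hx : ∀ i, |x i| < 1 / 2)
    (hx0 : x (Fin.last n) < 0) (hy : 0 < y (Fin.last n)) (hyQ : ¬ ∀ i, |y i| < 1 / 2) :
    ∏ i, √(aux10_a n i (x i)) ≤ ‖x - y‖ := by
  push Not at hyQ
  obtain ⟨i, hi⟩ := hyQ
  have hle : ∀ j, √(aux10_a n j (x j)) ≤ 1 := by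
    intro j
    refine Real.sqrt_le_iff.2 ⟨zero_le_one, ?_⟩; rw [one_pow]
    have := hx j
    have := abs_nonneg (x j)
    unfold aux10_a; split_ifs <;> linarith
  have hc : ∀ j, |x j - y j| ≤ ‖x - y‖ := fun j => by
    simpa using PiLp.norm_apply_le (x - y) j
  have hl := hc (Fin.last n)
  rw [abs_of_neg (by linarith)] at hl
  rw [← Finset.mul_prod_erase _ _ (Finset.mem_univ (Fin.last n))]
  by_cases h : i = Fin.last n
  · subst h
    rw [abs_of_pos hy] at hi
    have h1 : ∏ j ∈ Finset.univ.erase (Fin.last n), √(aux10_a n j (x j)) ≤ 1 :=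
      Finset.prod_le_one (fun _ _ => Real.sqrt_nonneg _) fun j _ => hle j
    have h2 : √(aux10_a n (Fin.last n) (x (Fin.last n))) ≤ ‖x - y‖ := by
      apply Real.sqrt_le_iff.2
      refine ⟨norm_nonneg _, ?_⟩
      simp only [aux10_a, if_true, abs_of_neg hx0]
      nlinarith [sq_nonneg (x (Fin.last n) + 1/2)]
    exact (mul_le_of_le_one_right (Real.sqrt_nonneg _) h1).trans h2
  · rw [← Finset.mul_prod_erase _ _ (Finset.mem_erase.2 ⟨h, Finset.mem_univ i⟩), ← mul_assoc]
    refine (mul_le_of_le_one_right (by positivity)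
      (Finset.prod_le_one (fun _ _ => Real.sqrt_nonneg _) fun j _ => hle j)).trans ?_
    have h1 : √(aux10_a n (Fin.last n) (x (Fin.last n))) ^ 2 = - x (Fin.last n) := by
      rw [Real.sq_sqrt] <;> simp [aux10_a, abs_of_neg hx0, hx0.le]
    have h2 : √(aux10_a n i (x i)) ^ 2 = 1/2 - |x i| := by
      rw [Real.sq_sqrt] <;> simp only [aux10_a, if_neg h]
      linarith [hx i]
    have h3 : 1/2 - |x i| ≤ ‖x - y‖ := by
      have := abs_sub_abs_le_abs_sub (y i) (x i)
      rw [abs_sub_comm] at this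
      linarith [hc i]
    apply le_of_sq_le_sq _ (norm_nonneg _)
    rw [mul_pow, h1, h2, sq]
    apply mul_le_mul <;> first | positivity | linarith [hx i]

/-- inner integral bound -/
theorem aux10_inner (n : ℕ) (x : EuclideanSpace ℝ (Fin (n + 1)))
    (E : Set (EuclideanSpace ℝ (Fin (n + 1)))) (hE : MeasurableSet E) (d s : ℝ) (hd : 0 < d) (hd1 : d ≤ 1)
    (hs : 1/2 ≤ s) (hs1 : s < 1) (h : ∀ y ∈ E, d ≤ ‖x - y‖) :
    ∫ y in E, ‖x - y‖ ^ (-(((n : ℝ) + 1) + s)) ≤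
      (2 ^ ((n:ℝ) + 2) * ∫ w : EuclideanSpace ℝ (Fin (n + 1)), (1 + ‖w‖) ^ (-((n:ℝ) + 1 + 1/2))) * d⁻¹ := by
  set p : ℝ := (n : ℝ) + 1 + s with hp
  set q : ℝ := (n : ℝ) + 1 + 1/2 with hq
  have hI : Integrable (fun w : EuclideanSpace ℝ (Fin (n + 1)) => (1 + ‖w‖) ^ (-q)) := by
    apply integrable_one_add_norm
    simp [hq]
  have hI2 : Integrable (fun y : EuclideanSpace ℝ (Fin (n + 1)) =>
      2 ^ ((n:ℝ) + 2) * d ^ (-p) * (1 + ‖d⁻¹ • (x - y)‖) ^ (-q)) := by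
    apply Integrable.const_mul
    exact ((integrable_comp_smul_iff volume (fun w => (1 + ‖w‖) ^ (-q)) (inv_ne_zero hd.ne')).2 hI).comp_sub_left x
  have hJ : 0 ≤ ∫ w : EuclideanSpace ℝ (Fin (n + 1)), (1 + ‖w‖) ^ (-q) :=
    integral_nonneg fun w => by positivity
  calc ∫ y in E, ‖x - y‖ ^ (-p)
      ≤ ∫ y in E, 2 ^ ((n:ℝ) + 2) * d ^ (-p) * (1 + ‖d⁻¹ • (x - y)‖) ^ (-q) := by
        refine integral_mono_of_nonneg (Eventually.of_forall fun y => by positivity) hI2.integrableOn ?_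
        filter_upwards [ae_restrict_mem hE] with y hy
        have h1 := h y hy
        set r := ‖x - y‖ with hr
        have hr0 : 0 < r := hd.trans_le h1
        have e1 : ‖d⁻¹ • (x - y)‖ = r / d := by
          rw [norm_smul, norm_inv, Real.norm_of_nonneg hd.le, hr]; ring
        have e2 : 1 ≤ r / d := (one_le_div hd).2 h1
        rw [e1]
        have e3 : r ^ (-p) = d ^ (-p) * (r / d) ^ (-p) := by
          rw [← Real.mul_rpow hd.le (by positivity)]
          congr 1; field_simp
        have e4 : (r / d) ^ (-p) ≤ 2 ^ ((n:ℝ) + 2) * (1 + r / d) ^ (-q) := by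
          calc (r / d) ^ (-p) = 2 ^ p * (2 * (r/d)) ^ (-p) := by
                rw [Real.mul_rpow (by norm_num) (by positivity), ← mul_assoc, ← Real.rpow_add (by norm_num)]
                simp
            _ ≤ 2 ^ p * (1 + r/d) ^ (-p) := by
                gcongr 2 ^ p * ?_
                apply Real.rpow_le_rpow_of_nonpos (by positivity) (by linarith)
                have : (0:ℝ) ≤ n := by positivity
                linarith
            _ ≤ 2 ^ ((n:ℝ) + 2) * (1 + r / d) ^ (-q) := by
                gcongr <;> linarith
        rw [e3]
        calc _ ≤ d ^ (-p) * (2 ^ ((n:ℝ) + 2) * (1 + r / d) ^ (-q)) := by gcongr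
          _ = _ := by ring
    _ ≤ ∫ y, 2 ^ ((n:ℝ) + 2) * d ^ (-p) * (1 + ‖d⁻¹ • (x - y)‖) ^ (-q) :=
        setIntegral_le_integral hI2 (Eventually.of_forall fun y => by positivity)
    _ = 2 ^ ((n:ℝ) + 2) * d ^ (-p) * (d ^ (n+1) * ∫ w : EuclideanSpace ℝ (Fin (n + 1)), (1 + ‖w‖) ^ (-q)) := by
        rw [integral_const_mul,
          integral_sub_left_eq_self (fun w : EuclideanSpace ℝ (Fin (n + 1)) => (1 + ‖d⁻¹ • w‖) ^ (-q)) volume x,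
          Measure.integral_comp_inv_smul volume (fun w : EuclideanSpace ℝ (Fin (n + 1)) => (1 + ‖w‖) ^ (-q)) d]
        simp [abs_of_pos hd]
    _ = (2 ^ ((n:ℝ) + 2) * ∫ w : EuclideanSpace ℝ (Fin (n + 1)), (1 + ‖w‖) ^ (-q)) * d ^ (-s) := by
        have : d ^ (-s) = d ^ (-p) * d ^ (n+1) := by
          rw [← Real.rpow_natCast, ← Real.rpow_add hd]
          congr 1; push_cast; rw [hp]; ring
        rw [this]; ring
    _ ≤ _ := by
        gcongr
        rw [← Real.rpow_neg_one]
        apply Real.rpow_le_rpow_of_exponent_ge hd hd1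
        linarith

/-- the cross interaction between `H ∩ Q` and `Hᶜ ∩ Qᶜ` vanishes after
rescaling by `(1-s)` as `s → 1⁻`.  Here the ambient dimension is `n + 1`, `H` is the
lower halfspace and `Q` the open unit cube centered at the origin. -/
theorem stmt10 (n : ℕ) :
    Filter.Tendsto
      (fun s : ℝ => (1 - s) *
        ∫ x in {x : EuclideanSpace ℝ (Fin (n + 1)) | x (Fin.last n) ≤ 0} ∩
            {x : EuclideanSpace ℝ (Fin (n + 1)) | ∀ i, |x i| < 1 / 2},
          ∫ y in {x : EuclideanSpace ℝ (Fin (n + 1)) | x (Fin.last n) ≤ 0}ᶜ ∩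
              {x : EuclideanSpace ℝ (Fin (n + 1)) | ∀ i, |x i| < 1 / 2}ᶜ,
            ‖x - y‖ ^ (-(((n : ℝ) + 1) + s)))
      (nhdsWithin 1 (Set.Iio 1)) (nhds 0) := by
  have hQ : MeasurableSet {x : EuclideanSpace ℝ (Fin (n + 1)) | ∀ i, |x i| < 1 / 2} := by
    rw [ofPred_forall]
    exact MeasurableSet.iInter fun i => measurableSet_lt (by fun_prop) (by fun_prop)
  have hH : MeasurableSet {x : EuclideanSpace ℝ (Fin (n + 1)) | x (Fin.last n) ≤ 0} :=
    measurableSet_le (by fun_prop) (by fun_prop)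
  set H := {x : EuclideanSpace ℝ (Fin (n + 1)) | x (Fin.last n) ≤ 0} with hHd
  set Q := {x : EuclideanSpace ℝ (Fin (n + 1)) | ∀ i, |x i| < 1 / 2} with hQd
  set C : ℝ := 2 ^ ((n:ℝ) + 2) * ∫ w : EuclideanSpace ℝ (Fin (n + 1)), (1 + ‖w‖) ^ (-((n:ℝ) + 1 + 1/2))
  set M : ℝ := ∫ x in H ∩ Q, C * (∏ i, √(aux10_a n i (x i)))⁻¹
  have hlim : Tendsto (fun s : ℝ => (1 - s) * M) (nhdsWithin 1 (Iio 1)) (nhds 0) := by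
    have : Continuous fun s : ℝ => (1 - s) * M := by fun_prop
    have h := (this.tendsto 1).mono_left (nhdsWithin_le_nhds (s := Iio 1))
    simpa using h
  have hev : ∀ᶠ s : ℝ in nhdsWithin 1 (Iio 1), 1/2 ≤ s ∧ s < 1 := by
    filter_upwards [Ioo_mem_nhdsLT (show (1/2:ℝ) < 1 by norm_num)] with s hs
    exact ⟨hs.1.le, hs.2⟩
  refine tendsto_of_tendsto_of_tendsto_of_le_of_le' tendsto_const_nhds hlim ?_ ?_
  · filter_upwards [hev] with s hs
    refine mul_nonneg (by linarith) (integral_nonneg fun x => integral_nonneg fun y => ?_)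
    positivity
  · filter_upwards [hev] with s hs
    refine mul_le_mul_of_nonneg_left ?_ (by linarith)
    refine integral_mono_of_nonneg (Eventually.of_forall fun x => integral_nonneg fun y => by positivity)
      (((aux10_W n).mono_set inter_subset_right).const_mul C) ?_
    filter_upwards [ae_restrict_mem (hH.inter hQ), ae_restrict_of_ae (aux10_ae n)] with x hx hx0
    have hxn : x (Fin.last n) < 0 := lt_of_le_of_ne hx.1 hx0
    have hxQ : ∀ i, |x i| < 1 / 2 := hx.2
    refine aux10_inner n x _ (hH.compl.inter hQ.compl) _ s ?_ ?_ hs.1 hs.2 ?_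
    · refine Finset.prod_pos fun i _ => Real.sqrt_pos.2 ?_
      unfold aux10_a; split_ifs with h
      · subst h; exact abs_pos.2 hx0
      · linarith [hxQ i]
    · refine Finset.prod_le_one (fun _ _ => Real.sqrt_nonneg _) fun i _ => ?_
      refine Real.sqrt_le_iff.2 ⟨zero_le_one, ?_⟩; rw [one_pow]
      have := hxQ i
      have := abs_nonneg (x i)
      unfold aux10_a; split_ifs <;> linarith
    · intro y hy
      exact aux10_d n x y hxQ hxn (not_le.1 hy.1) hy.2
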